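/- Let M be a manifold with a transversely holomorphic foliation F of complex codimension q whose basic Dolbeault cohomology groups are finite dimensional. Then for every k: Σ_{p+q=k} (dim_C H^{p,q}_{BC}(M/F) + dim_C H^{p,q}_A(M/F)) ≥ 2 dim_C H^k(M/F, C), with equality for all k if and only if the basic Dolbeault double complex of F satisfies the ∂∂̄-lemma. -/

import Mathlib

open LinearMap

/-- The (cardinal) dimension of the quotient `A / (A ∩ B)` of submodules. -/
noncomputable def qrank {V : Type*} [AddCommGroup V] [Module ℂ V]
    (A B : Submodule ℂ V) : Cardinal :=
  Module.rank ℂ (↥A ⧸ B.comap A.subtype)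

/-- The total-degree-`k` piece `⨁_{a+b=k} V^{a,b}` of a bigraded space. -/
def totalPiece {V : Type*} [AddCommGroup V] [Module ℂ V]
    (𝒱 : ℕ × ℕ → Submodule ℂ V) (k : ℕ) : Submodule ℂ V :=
  ⨆ a ∈ Finset.range (k + 1), 𝒱 (a, k - a)

/-!
In total degree `k` let `N k` and `M k` be the dimensions of the kernel and the cokernel of
`H_BC → H`, and let `L k` be the dimension of the kernel of `H → H_A`. Since `d` identifies the
cokernel of `H^k → H_A^k` with the kernel of `H_BC^{k+1} → H^{k+1}`, the numbers `2 dim H^k` and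
`dim H_BC^k + dim H_A^k` share a common summand, next to which the former has `L k + M k` and the
latter `N k + N (k + 1)`.

Let `T` be multiplication by the holomorphic degree, so that `[T, ∂] = ∂` and `[T, ∂̄] = 0`. Then
`T` maps the kernel of `H_BC → H` onto that of `H → H_A`, whence `L k ≤ N k`. On closed forms
`∂ = -d T`, so `∂` embeds the cokernel of `H_BC^k → H^k` into the kernel of
`H_BC^{k+1} → H^{k+1}`, whence `M k ≤ N (k + 1)`. This gives the inequality.

The image of this embedding is killed by `T`, because `2 T ∂x = -d (T² x + T x)` for closed `x`;
hence `M k + L (k + 1) ≤ N (k + 1)`. When all dimensions are finite, equality in every degree means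
`M k = L (k + 1) = N (k + 1)`, which forces `N = 0`, and this is the `∂∂̄`-lemma.
Conversely, `N = 0` gives `L = M = 0`.
-/

theorem eq_and_eq_of_add_eq_add_of_lt_aleph0 {a b a' b' : Cardinal} (ha : a ≤ a') (hb : b ≤ b')
    (h : a + b = a' + b') (hfin : a + b < Cardinal.aleph0) : a = a' ∧ b = b' := by
  obtain ⟨ha'fin, hb'fin⟩ := Cardinal.add_lt_aleph0_iff.1 (h ▸ hfin)
  obtain ⟨hafin, hbfin⟩ := Cardinal.add_lt_aleph0_iff.1 hfin
  lift a to ℕ using hafin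
  lift b to ℕ using hbfin
  lift a' to ℕ using ha'fin
  lift b' to ℕ using hb'fin
  norm_cast at *
  omega

section RelativeRank

universe u

variable {V W : Type u} [AddCommGroup V] [Module ℂ V] [AddCommGroup W] [Module ℂ W]
  {A A' B B' C : Submodule ℂ V}

theorem rank_map_eq_qrank_ker (A : Submodule ℂ V) (f : V →ₗ[ℂ] W) :
    Module.rank ℂ (A.map f) = qrank A (ker f) := by
  have e := (f.domRestrict A).quotKerEquivRange.rank_eq
  rw [ker_domRestrict, range_domRestrict] at e
  exact e.symm

theorem qrank_eq_rank_map_mkQ (A B : Submodule ℂ V) :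
    qrank A B = Module.rank ℂ (A.map B.mkQ) := by
  rw [rank_map_eq_qrank_ker, Submodule.ker_mkQ]

theorem qrank_map (A : Submodule ℂ V) (B : Submodule ℂ W) (f : V →ₗ[ℂ] W) :
    qrank (A.map f) B = qrank A (B.comap f) := by
  rw [qrank_eq_rank_map_mkQ, ← Submodule.map_comp, rank_map_eq_qrank_ker, ker_comp,
    Submodule.ker_mkQ]

theorem qrank_eq_zero_iff : qrank A B = 0 ↔ A ≤ B := by
  rw [qrank, rank_zero_iff, Submodule.Quotient.subsingleton_iff,
    Submodule.comap_subtype_eq_top]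

theorem qrank_le_of_le_sup (h : A ≤ A' ⊔ B) : qrank A B ≤ qrank A' B := by
  have hmap : A.map B.mkQ ≤ A'.map B.mkQ := by
    simpa only [Submodule.map_sup, Submodule.mkQ_map_self, sup_bot_eq]
      using Submodule.map_mono (f := B.mkQ) h
  simpa only [qrank_eq_rank_map_mkQ] using Submodule.rank_mono hmap

theorem qrank_le_of_inf_le (h : A ⊓ B ≤ B') : qrank A B' ≤ qrank A B := by
  have hcomap : B.comap A.subtype ≤ B'.comap A.subtype := fun x hx ↦ h ⟨x.2, hx⟩
  exact rank_le_of_surjective (Submodule.factor hcomap) (Submodule.factor_surjective hcomap)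

theorem qrank_congr_right (h : A ⊓ B ≤ B') (h' : A ⊓ B' ≤ B) : qrank A B = qrank A B' :=
  (qrank_le_of_inf_le h').antisymm (qrank_le_of_inf_le h)

theorem qrank_eq_add (A : Submodule ℂ V) (h : B ≤ C) :
    qrank A B = qrank A C + qrank (A ⊓ C) B := by
  have hcomap : B.comap A.subtype ≤ C.comap A.subtype := Submodule.comap_mono h
  have quotient_rank := (Submodule.quotientQuotientEquivQuotient _ _ hcomap).rank_eq
  rw [← Submodule.map_comap_subtype, qrank_map, qrank_eq_rank_map_mkQ (C.comap A.subtype), qrank,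
    qrank, ← quotient_rank, Submodule.rank_quotient_add_rank]

theorem qrank_eq_add_of_le (B : Submodule ℂ V) (h : A' ≤ A) :
    qrank A B = qrank A (B ⊔ A') + qrank A' B := by
  rw [qrank_eq_add A (le_sup_left : B ≤ B ⊔ A')]
  congr 1
  refine (qrank_le_of_le_sup ?_).antisymm (qrank_le_of_le_sup ?_)
  · exact inf_le_right.trans (sup_comm B A').le
  · exact (le_inf h le_sup_right).trans le_sup_left

theorem qrank_le_add (A B C : Submodule ℂ V) : qrank A B ≤ qrank A C + qrank (A ⊓ C) B := by
  rw [qrank_eq_add A (le_sup_left : B ≤ B ⊔ A ⊓ C)]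
  refine add_le_add (qrank_le_of_inf_le le_sup_right) (qrank_le_of_le_sup ?_)
  exact inf_le_right.trans (sup_comm B (A ⊓ C)).le

end RelativeRank

section Graded

variable {ι R V : Type*} [CommRing R] [AddCommGroup V] [Module R V]
  {𝒱 : ι → Submodule R V}

/-- The sum of the pieces of a graded module with index in `s`. -/
def gradedPart (𝒱 : ι → Submodule R V) (s : Set ι) : Submodule R V :=
  ⨆ i ∈ s, 𝒱 i

theorem gradedPart_mono {s t : Set ι} (hst : s ⊆ t) : gradedPart 𝒱 s ≤ gradedPart 𝒱 t :=
  biSup_mono hst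

theorem le_gradedPart {s : Set ι} {i : ι} (hi : i ∈ s) : 𝒱 i ≤ gradedPart 𝒱 s :=
  le_biSup 𝒱 hi

theorem gradedPart_le_iff {s : Set ι} {N : Submodule R V} :
    gradedPart 𝒱 s ≤ N ↔ ∀ i ∈ s, 𝒱 i ≤ N :=
  iSup₂_le_iff

theorem gradedPart_singleton (i : ι) : gradedPart 𝒱 {i} = 𝒱 i :=
  iSup_singleton

theorem apply_mem_gradedPart_of_mapsTo {σ : ι → ι} {f : Module.End R V}
    (hf : ∀ i, ∀ x ∈ 𝒱 i, f x ∈ 𝒱 (σ i)) {s t : Set ι} (hst : Set.MapsTo σ s t) {x : V}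
    (hx : x ∈ gradedPart 𝒱 s) : f x ∈ gradedPart 𝒱 t := by
  have hle : gradedPart 𝒱 s ≤ (gradedPart 𝒱 t).comap f :=
    gradedPart_le_iff.2 fun i hi y hy ↦ le_gradedPart (hst hi) (hf i y hy)
  exact hle hx

variable [DecidableEq ι]

theorem linearMap_ext_of_isInternal {W : Type*} [AddCommGroup W] [Module R W]
    (h : DirectSum.IsInternal 𝒱) {f g : V →ₗ[R] W} (hfg : ∀ i, ∀ x ∈ 𝒱 i, f x = g x) : f = g :=
  eqLocus_eq_top.1 (top_le_iff.1 (h.submodule_iSup_eq_top ▸ iSup_le hfg))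

/-- The endomorphism acting on the piece `𝒱 i` of an internal direct sum as the scalar `c i`. -/
noncomputable def diagonalEnd (h : DirectSum.IsInternal 𝒱) (c : ι → R) : Module.End R V :=
  DirectSum.toModule R ι V (fun i ↦ c i • (𝒱 i).subtype) ∘ₗ
    (LinearEquiv.ofBijective (DirectSum.coeLinearMap 𝒱) h).symm

theorem diagonalEnd_apply_of_mem (h : DirectSum.IsInternal 𝒱) (c : ι → R) {i : ι} {x : V}
    (hx : x ∈ 𝒱 i) : diagonalEnd h c x = c i • x := by
  have hx' : (LinearEquiv.ofBijective (DirectSum.coeLinearMap 𝒱) h).symm x =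
      DirectSum.lof R ι (fun j ↦ 𝒱 j) i ⟨x, hx⟩ := by
    rw [LinearEquiv.symm_apply_eq]
    exact (DirectSum.coeLinearMap_lof 𝒱 i ⟨x, hx⟩).symm
  simp [diagonalEnd, hx']

/-- The projection of a graded module onto `gradedPart 𝒱 s` along the remaining pieces. -/
noncomputable def gradedProj (h : DirectSum.IsInternal 𝒱) (s : Set ι) : Module.End R V :=
  diagonalEnd h (s.indicator 1)

theorem gradedProj_apply_of_mem (h : DirectSum.IsInternal 𝒱) {s : Set ι} {i : ι} (hi : i ∈ s)
    {x : V} (hx : x ∈ 𝒱 i) : gradedProj h s x = x := by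
  simp [gradedProj, diagonalEnd_apply_of_mem h _ hx, hi]

theorem gradedProj_apply_of_notMem (h : DirectSum.IsInternal 𝒱) {s : Set ι} {i : ι} (hi : i ∉ s)
    {x : V} (hx : x ∈ 𝒱 i) : gradedProj h s x = 0 := by
  simp [gradedProj, diagonalEnd_apply_of_mem h _ hx, hi]

theorem gradedProj_empty (h : DirectSum.IsInternal 𝒱) : gradedProj h ∅ = 0 :=
  linearMap_ext_of_isInternal h fun _ _ ↦ gradedProj_apply_of_notMem h (Set.notMem_empty _)

theorem isProj_gradedProj (h : DirectSum.IsInternal 𝒱) (s : Set ι) :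
    IsProj (gradedPart 𝒱 s) (gradedProj h s) where
  map_mem := by
    suffices ⊤ ≤ (gradedPart 𝒱 s).comap (gradedProj h s) from fun x ↦ this Submodule.mem_top
    rw [← h.submodule_iSup_eq_top, iSup_le_iff]
    intro i x hx
    by_cases hi : i ∈ s
    · simpa [gradedProj_apply_of_mem h hi hx] using le_gradedPart hi hx
    · simp [gradedProj_apply_of_notMem h hi hx]
  map_id := by
    have hle : gradedPart 𝒱 s ≤ eqLocus (gradedProj h s) LinearMap.id :=
      gradedPart_le_iff.2 fun _ hi _ hx ↦ gradedProj_apply_of_mem h hi hx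
    exact fun x hx ↦ hle hx

theorem gradedProj_eq_zero_of_disjoint (h : DirectSum.IsInternal 𝒱) {s t : Set ι}
    (hst : Disjoint s t) {x : V} (hx : x ∈ gradedPart 𝒱 t) : gradedProj h s x = 0 := by
  have hle : gradedPart 𝒱 t ≤ ker (gradedProj h s) := gradedPart_le_iff.2 fun _ hi _ hy ↦
    gradedProj_apply_of_notMem h (Set.disjoint_right.1 hst hi) hy
  exact hle hx

theorem gradedProj_gradedProj_of_subset (h : DirectSum.IsInternal 𝒱) {s t : Set ι}
    (hst : s ⊆ t) (x : V) : gradedProj h s (gradedProj h t x) = gradedProj h s x := by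
  refine LinearMap.congr_fun (f := gradedProj h s ∘ₗ gradedProj h t)
    (linearMap_ext_of_isInternal h fun i x hx ↦ ?_) x
  by_cases hi : i ∈ t
  · simp [gradedProj_apply_of_mem h hi hx]
  · simp [gradedProj_apply_of_notMem h hi hx,
      gradedProj_apply_of_notMem h (fun his ↦ hi (hst his)) hx]

theorem sub_gradedProj_mem_gradedPart_diff (h : DirectSum.IsInternal 𝒱) {s : Set ι} (t : Set ι)
    {x : V} (hx : x ∈ gradedPart 𝒱 s) : x - gradedProj h t x ∈ gradedPart 𝒱 (s \ t) := by
  have hle : gradedPart 𝒱 s ≤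
      (gradedPart 𝒱 (s \ t)).comap (LinearMap.id - gradedProj h t) := by
    refine gradedPart_le_iff.2 fun i his x hx ↦ ?_
    by_cases hit : i ∈ t
    · simp [gradedProj_apply_of_mem h hit hx]
    · simpa [gradedProj_apply_of_notMem h hit hx]
        using le_gradedPart (Set.mem_sdiff_of_mem his hit) hx
  exact hle hx

theorem mem_of_forall_gradedProj_singleton_mem (h : DirectSum.IsInternal 𝒱) {N : Submodule R V}
    {x : V} (hx : ∀ i, gradedProj h {i} x ∈ N) : x ∈ N := by
  have hx_top : x ∈ ⨆ i, 𝒱 i := h.submodule_iSup_eq_top ▸ Submodule.mem_top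
  obtain ⟨s, hxs⟩ := Submodule.mem_iSup_iff_exists_finset.1 hx_top
  have hle : ⨆ i ∈ s, 𝒱 i ≤ eqLocus (∑ i ∈ s, gradedProj h {i}) LinearMap.id := by
    refine iSup₂_le fun i hi y hy ↦ ?_
    rw [mem_eqLocus, LinearMap.sum_apply, Finset.sum_eq_single_of_mem i hi, id_apply,
      gradedProj_apply_of_mem h (Set.mem_singleton i) hy]
    exact fun j _ hji ↦ gradedProj_apply_of_notMem h (s := {j}) hji.symm hy
  have sum_eq : ∑ i ∈ s, gradedProj h {i} x = x := by
    simpa only [LinearMap.sum_apply, id_apply] using mem_eqLocus.1 (hle hxs)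
  exact sum_eq ▸ N.sum_mem fun i _ ↦ hx i

theorem gradedProj_apply_shift (h : DirectSum.IsInternal 𝒱) {σ : ι → ι} {f : Module.End R V}
    (hf : ∀ i, ∀ x ∈ 𝒱 i, f x ∈ 𝒱 (σ i)) (s : Set ι) (x : V) :
    gradedProj h s (f x) = f (gradedProj h (σ ⁻¹' s) x) := by
  refine LinearMap.congr_fun (f := gradedProj h s ∘ₗ f) (g := f ∘ₗ gradedProj h (σ ⁻¹' s))
    (linearMap_ext_of_isInternal h fun i x hx ↦ ?_) x
  by_cases hi : σ i ∈ s
  · simp [gradedProj_apply_of_mem h hi (hf i x hx),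
      gradedProj_apply_of_mem h (Set.mem_preimage.2 hi) hx]
  · simp [gradedProj_apply_of_notMem h hi (hf i x hx),
      gradedProj_apply_of_notMem h (s := σ ⁻¹' s) hi hx]

/-- The lattice of homogeneous submodules of a graded module, that is of those stable under every
projection `gradedProj h s`. -/
noncomputable def homogeneousSubmodules (h : DirectSum.IsInternal 𝒱) :
    Sublattice (Submodule R V) :=
  ⨅ s, (gradedProj h s).invtSubmodule

theorem mem_homogeneousSubmodules_iff {h : DirectSum.IsInternal 𝒱} {A : Submodule R V} :
    A ∈ homogeneousSubmodules h ↔ ∀ s, ∀ x ∈ A, gradedProj h s x ∈ A := by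
  simp only [homogeneousSubmodules, Sublattice.mem_iInf,
    Module.End.mem_invtSubmodule_iff_forall_mem_of_mem]

theorem range_mem_homogeneousSubmodules (h : DirectSum.IsInternal 𝒱) {σ : ι → ι}
    {f : Module.End R V} (hf : ∀ i, ∀ x ∈ 𝒱 i, f x ∈ 𝒱 (σ i)) :
    range f ∈ homogeneousSubmodules h := by
  refine mem_homogeneousSubmodules_iff.2 fun s x hx ↦ ?_
  obtain ⟨y, rfl⟩ := hx
  exact ⟨_, (gradedProj_apply_shift h hf s y).symm⟩

theorem ker_mem_homogeneousSubmodules (h : DirectSum.IsInternal 𝒱) {σ : ι → ι}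
    {f : Module.End R V} (hσ : σ.Injective) (hf : ∀ i, ∀ x ∈ 𝒱 i, f x ∈ 𝒱 (σ i)) :
    ker f ∈ homogeneousSubmodules h := by
  refine mem_homogeneousSubmodules_iff.2 fun s x hx ↦ ?_
  rw [mem_ker, ← Set.preimage_image_eq s hσ, ← gradedProj_apply_shift h hf, mem_ker.1 hx,
    map_zero]

end Graded

section GradedRelativeRank

variable {ι V : Type*} [AddCommGroup V] [Module ℂ V] {A A' B P : Submodule ℂ V}

theorem qrank_inf_eq_add_of_isProj {q : Module.End ℂ V} (hq : IsProj P q)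
    (hA' : A' ∈ q.invtSubmodule) (hB : B ∈ q.invtSubmodule) (h : A' ≤ A) :
    qrank (A ⊓ P) B = qrank (A ⊓ P) (B ⊔ A') + qrank (A' ⊓ P) B := by
  rw [qrank_eq_add_of_le B (inf_le_inf_right P h)]
  congr 1
  refine qrank_congr_right (inf_le_right.trans (sup_le_sup_left inf_le_left B)) fun x hx ↦ ?_
  obtain ⟨⟨-, hxP⟩, hx⟩ := hx
  obtain ⟨b, hb, a, ha, rfl⟩ := Submodule.mem_sup.1 hx
  rw [← hq.map_id _ hxP, map_add]
  exact Submodule.add_mem_sup (hB hb) ⟨hA' ha, hq.map_mem a⟩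

variable [DecidableEq ι] {𝒱 : ι → Submodule ℂ V}

theorem qrank_inf_gradedPart_insert (h : DirectSum.IsInternal 𝒱)
    (hA : A ∈ homogeneousSubmodules h) (hB : B ∈ homogeneousSubmodules h) {i : ι} {s : Set ι}
    (hi : i ∉ s) :
    qrank (A ⊓ gradedPart 𝒱 (insert i s)) B =
      qrank (A ⊓ 𝒱 i) B + qrank (A ⊓ gradedPart 𝒱 s) B := by
  have hA := mem_homogeneousSubmodules_iff.1 hA
  have hB := mem_homogeneousSubmodules_iff.1 hB
  have map_proj : (A ⊓ gradedPart 𝒱 (insert i s)).map (gradedProj h {i}) = A ⊓ 𝒱 i := by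
    rw [← gradedPart_singleton (𝒱 := 𝒱)]
    refine le_antisymm ?_ fun x hx ↦ ⟨x, ?_, (isProj_gradedProj h {i}).map_id x hx.2⟩
    · rintro _ ⟨x, hx, rfl⟩
      exact ⟨hA _ x hx.1, (isProj_gradedProj h {i}).map_mem x⟩
    · exact ⟨hx.1, gradedPart_mono (Set.singleton_subset_iff.2 (Set.mem_insert i s)) hx.2⟩
  rw [qrank_eq_add (A ⊓ gradedPart 𝒱 (insert i s)) (C := B.comap (gradedProj h {i})) (hB _),
    ← qrank_map, map_proj]
  congr 1
  refine (qrank_le_of_le_sup fun x hx ↦ ?_).antisymm (qrank_le_of_le_sup ?_)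
  · obtain ⟨⟨hxA, hxs⟩, hxB⟩ := hx
    rw [← sub_add_cancel x (gradedProj h {i} x)]
    refine Submodule.add_mem_sup ⟨A.sub_mem hxA (hA _ x hxA), ?_⟩ hxB
    exact gradedPart_mono (by grind) (sub_gradedProj_mem_gradedPart_diff h {i} hxs)
  · refine le_sup_of_le_left fun x hx ↦ ⟨⟨hx.1, gradedPart_mono (Set.subset_insert i s) hx.2⟩, ?_⟩
    have hx_proj := gradedProj_eq_zero_of_disjoint h (Set.disjoint_singleton_left.2 hi) hx.2
    exact Submodule.mem_comap.2 (hx_proj ▸ B.zero_mem)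

theorem sum_qrank_inf (h : DirectSum.IsInternal 𝒱) (hA : A ∈ homogeneousSubmodules h)
    (hB : B ∈ homogeneousSubmodules h) (s : Finset ι) :
    ∑ i ∈ s, qrank (A ⊓ 𝒱 i) B = qrank (A ⊓ gradedPart 𝒱 s) B := by
  induction s using Finset.induction_on with
  | empty => simp [gradedPart, qrank_eq_zero_iff.2 bot_le]
  | insert i s hi ih =>
    rw [Finset.sum_insert hi, ih, Finset.coe_insert,
      qrank_inf_gradedPart_insert h hA hB (Finset.mem_coe.not.2 hi)]

end GradedRelativeRank

/-- A pair of anticommuting differentials: an ungraded double complex. -/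
structure IsBicomplex {R V : Type*} [Ring R] [AddCommGroup V] [Module R V]
    (dp db : Module.End R V) : Prop where
  dp_dp (x : V) : dp (dp x) = 0
  db_db (x : V) : db (db x) = 0
  db_dp (x : V) : db (dp x) = -dp (db x)

namespace IsBicomplex

variable {R V : Type*} [Ring R] [AddCommGroup V] [Module R V] {dp db : Module.End R V}

theorem inf_ker_le_ker_add (dp db : Module.End R V) : ker dp ⊓ ker db ≤ ker (dp + db) :=
  fun x hx ↦ by rw [mem_ker, LinearMap.add_apply, mem_ker.1 hx.1, mem_ker.1 hx.2, add_zero]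

theorem db_apply_of_mem_ker_add {x : V} (hx : x ∈ ker (dp + db)) : db x = -dp x :=
  eq_neg_of_add_eq_zero_right (mem_ker.1 hx)

theorem ker_add_le_ker_comp (h : IsBicomplex dp db) : ker (dp + db) ≤ ker (dp ∘ₗ db) := by
  intro x hx
  rw [mem_ker, comp_apply, db_apply_of_mem_ker_add hx, map_neg, h.dp_dp, neg_zero]

theorem range_add_le_ker_add (h : IsBicomplex dp db) : range (dp + db) ≤ ker (dp + db) := by
  rintro _ ⟨x, rfl⟩
  simp [h.dp_dp, h.db_db, h.db_dp]

theorem range_comp_le_range_add (h : IsBicomplex dp db) : range (dp ∘ₗ db) ≤ range (dp + db) := by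
  rintro _ ⟨x, rfl⟩
  exact ⟨db x, by simp [h.db_db]⟩

theorem range_comp_le_inf_ker (h : IsBicomplex dp db) : range (dp ∘ₗ db) ≤ ker dp ⊓ ker db := by
  rintro _ ⟨x, rfl⟩
  simp [h.dp_dp, h.db_db, h.db_dp]

theorem comap_add_range_comp (h : IsBicomplex dp db) :
    (range (dp ∘ₗ db)).comap (dp + db) = range dp ⊔ range db ⊔ ker (dp + db) := by
  refine le_antisymm ?_ (sup_le (sup_le ?_ ?_) fun x hx ↦ ?_)
  · rintro x ⟨y, hxy⟩
    rw [← add_sub_cancel (db y) x]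
    refine Submodule.add_mem_sup (Submodule.mem_sup_right ⟨y, rfl⟩) ?_
    rw [mem_ker, map_sub, ← hxy]
    simp [h.db_db]
  · rintro _ ⟨x, rfl⟩
    exact ⟨-x, by simp [h.dp_dp, h.db_dp]⟩
  · rintro _ ⟨x, rfl⟩
    exact ⟨x, by simp [h.db_db]⟩
  · rw [Submodule.mem_comap, mem_ker.1 hx]
    exact zero_mem _

theorem add_apply_mem_inf_ker_iff (h : IsBicomplex dp db) {x : V} :
    (dp + db) x ∈ ker dp ⊓ ker db ↔ x ∈ ker (dp ∘ₗ db) := by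
  simp [h.dp_dp, h.db_db, h.db_dp]

theorem ker_add_inf_comap_range_comp (h : IsBicomplex dp db) :
    ker (dp + db) ⊓ (range (dp ∘ₗ db)).comap dp = range (dp + db) ⊔ ker dp ⊓ ker db := by
  refine le_antisymm ?_ (sup_le (le_inf h.range_add_le_ker_add ?_)
    (le_inf (inf_ker_le_ker_add dp db) fun x hx ↦ ?_))
  · rintro x ⟨hx, y, hxy⟩
    rw [← add_sub_cancel ((dp + db) y) x]
    refine Submodule.add_mem_sup ⟨y, rfl⟩ ?_
    simp only [comp_apply] at hxy
    simp [h.dp_dp, h.db_db, h.db_dp, db_apply_of_mem_ker_add hx, hxy]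
  · rintro _ ⟨x, rfl⟩
    exact ⟨x, by simp [h.dp_dp]⟩
  · rw [Submodule.mem_comap, mem_ker.1 hx.1]
    exact zero_mem _

end IsBicomplex

/-- `T` acts as a weight for a pair of operators if `dp` raises its eigenvalues by one and `db`
preserves them. On a bigraded space it is multiplication by `a` on `V^{a,b}`. -/
structure IsWeight {R V : Type*} [Ring R] [AddCommGroup V] [Module R V]
    (T dp db : Module.End R V) : Prop where
  apply_dp (x : V) : T (dp x) = dp (T x) + dp x
  apply_db (x : V) : T (db x) = db (T x)

namespace IsWeight

section Ring

variable {R V : Type*} [Ring R] [AddCommGroup V] [Module R V] {T dp db : Module.End R V}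

theorem apply_add (hT : IsWeight T dp db) (x : V) :
    T ((dp + db) x) = (dp + db) (T x) + dp x := by
  simp only [LinearMap.add_apply, map_add, hT.apply_dp, hT.apply_db]
  abel

theorem add_apply_of_mem_ker (hT : IsWeight T dp db) {x : V} (hx : x ∈ ker (dp + db)) :
    (dp + db) (T x) = -dp x := by
  rw [eq_neg_iff_add_eq_zero, ← hT.apply_add, mem_ker.1 hx, map_zero]

theorem dp_apply_mem_range_add (hT : IsWeight T dp db) {x : V} (hx : x ∈ ker (dp + db)) :
    dp x ∈ range (dp + db) :=
  ⟨-T x, by rw [map_neg, hT.add_apply_of_mem_ker hx, neg_neg]⟩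

theorem map_dp_ker_add_le (hT : IsWeight T dp db) (h : IsBicomplex dp db) :
    (ker (dp + db)).map dp ≤ ker dp ⊓ ker db ⊓ range (dp + db) := by
  rintro _ ⟨x, hx, rfl⟩
  refine ⟨⟨h.dp_dp x, mem_ker.2 ?_⟩, hT.dp_apply_mem_range_add hx⟩
  rw [h.db_dp, ← comp_apply, mem_ker.1 (h.ker_add_le_ker_comp hx), neg_zero]

theorem range_comp_le_comap (hT : IsWeight T dp db) (h : IsBicomplex dp db) :
    range (dp ∘ₗ db) ≤ (range (dp + db)).comap T := by
  rintro _ ⟨x, rfl⟩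
  exact h.range_comp_le_range_add ⟨T x + x, by simp [hT.apply_dp, hT.apply_db]⟩

theorem ker_add_inf_range_sup_le (hT : IsWeight T dp db) (h : IsBicomplex dp db) :
    ker (dp + db) ⊓ (range dp ⊔ range db) ≤
      (ker dp ⊓ ker db ⊓ range (dp + db)).map T ⊔ range (dp + db) := by
  rintro _ ⟨hx, hxs⟩
  obtain ⟨_, ⟨u, rfl⟩, _, ⟨v, rfl⟩, rfl⟩ := Submodule.mem_sup.1 hxs
  have hw : (dp + db) (u - v) ∈ ker dp ⊓ ker db := by
    have hclosed : dp (db v) - dp (db u) = 0 := by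
      simpa [h.dp_dp, h.db_db, h.db_dp, sub_eq_add_neg] using mem_ker.1 hx
    rw [h.add_apply_mem_inf_ker_iff, mem_ker, comp_apply, map_sub, map_sub]
    exact sub_eq_zero.2 (sub_eq_zero.1 hclosed).symm
  have decomposition : dp u + db v = T ((dp + db) (u - v)) + (dp + db) (v - T (u - v)) := by
    rw [hT.apply_add, map_sub (dp + db) v, map_sub dp, LinearMap.add_apply dp db v]
    abel
  rw [decomposition]
  exact Submodule.add_mem_sup ⟨_, ⟨hw, _, rfl⟩, rfl⟩ ⟨_, rfl⟩

end Ring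

theorem apply_dp_mem_range_add {K V : Type*} [Field K] [NeZero (2 : K)] [AddCommGroup V]
    [Module K V] {T dp db : Module.End K V} (hT : IsWeight T dp db) {x : V}
    (hx : x ∈ ker (dp + db)) : T (dp x) ∈ range (dp + db) := by
  have apply_sq : -T (dp x) = (dp + db) (T (T x)) + (T (dp x) - dp x) := by
    rw [← map_neg, ← hT.add_apply_of_mem_ker hx, hT.apply_add, hT.apply_dp, add_sub_cancel_right]
  have two_smul_mem : (2 : K) • T (dp x) ∈ range (dp + db) := by
    refine ⟨-(T (T x) + T x), ?_⟩
    rw [map_neg, map_add, hT.add_apply_of_mem_ker hx, ← sub_eq_iff_eq_add.2 apply_sq, two_smul]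
    abel
  exact (Submodule.smul_mem_iff _ (NeZero.ne 2)).1 two_smul_mem

end IsWeight

section Weight

variable {R V : Type*} [CommRing R] [AddCommGroup V] [Module R V] {𝒱 : ℕ × ℕ → Submodule R V}

/-- The operator multiplying `V^{a,b}` by the holomorphic degree `a`. -/
noncomputable def holomorphicWeight (h : DirectSum.IsInternal 𝒱) : Module.End R V :=
  diagonalEnd h fun i ↦ (i.1 : R)

theorem holomorphicWeight_apply_of_mem (h : DirectSum.IsInternal 𝒱) {i : ℕ × ℕ} {x : V}
    (hx : x ∈ 𝒱 i) : holomorphicWeight h x = (i.1 : R) • x :=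
  diagonalEnd_apply_of_mem h _ hx

/-- The projection of a bigraded module onto its part of total degree `k`. -/
noncomputable def totalProj (h : DirectSum.IsInternal 𝒱) (k : ℕ) : Module.End R V :=
  gradedProj h {i | i.1 + i.2 = k}

theorem totalProj_holomorphicWeight (h : DirectSum.IsInternal 𝒱) (k : ℕ) (x : V) :
    totalProj h k (holomorphicWeight h x) = holomorphicWeight h (totalProj h k x) :=
  gradedProj_apply_shift (σ := id) h (fun _ _ hy ↦
    holomorphicWeight_apply_of_mem h hy ▸ Submodule.smul_mem _ _ hy) _ x

theorem mem_invtSubmodule_of_mem_homogeneousSubmodules (h : DirectSum.IsInternal 𝒱)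
    {A : Submodule R V} (hA : A ∈ homogeneousSubmodules h) (k : ℕ) :
    A ∈ (totalProj h k).invtSubmodule :=
  Sublattice.mem_iInf.1 hA _

end Weight

section TotalPiece

variable {V : Type*} [AddCommGroup V] [Module ℂ V] {𝒱 : ℕ × ℕ → Submodule ℂ V}

theorem totalPiece_eq_gradedPart (𝒱 : ℕ × ℕ → Submodule ℂ V) (k : ℕ) :
    totalPiece 𝒱 k = gradedPart 𝒱 {i | i.1 + i.2 = k} := by
  refine le_antisymm (iSup₂_le fun a ha ↦ le_gradedPart ?_) (gradedPart_le_iff.2 ?_)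
  · exact Nat.add_sub_of_le (Finset.mem_range_succ_iff.1 ha)
  · rintro ⟨a, b⟩ rfl
    simpa [totalPiece] using le_biSup (fun a' ↦ 𝒱 (a', a + b - a'))
      (Finset.mem_range.2 (by omega : a < a + b + 1))

theorem isProj_totalProj (h : DirectSum.IsInternal 𝒱) (k : ℕ) :
    IsProj (totalPiece 𝒱 k) (totalProj h k) :=
  totalPiece_eq_gradedPart 𝒱 k ▸ isProj_gradedProj h _

theorem sum_qrank_inf_eq_qrank_inf_totalPiece (h : DirectSum.IsInternal 𝒱) {A B : Submodule ℂ V}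
    (hA : A ∈ homogeneousSubmodules h) (hB : B ∈ homogeneousSubmodules h) (k : ℕ) :
    ∑ a ∈ Finset.range (k + 1), qrank (A ⊓ 𝒱 (a, k - a)) B = qrank (A ⊓ totalPiece 𝒱 k) B := by
  rw [← Finset.Nat.sum_antidiagonal_eq_sum_range_succ_mk (fun i ↦ qrank (A ⊓ 𝒱 i) B),
    sum_qrank_inf h hA hB, totalPiece_eq_gradedPart]
  congr 3
  ext i
  exact Finset.HasAntidiagonal.mem_antidiagonal

/-- The filtration `⨁_{a+b=k, a≥p} V^{a,b}` of the part of total degree `k`, which induces the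
Frölicher spectral sequence. -/
def columnFiltration (𝒱 : ℕ × ℕ → Submodule ℂ V) (k p : ℕ) : Submodule ℂ V :=
  gradedPart 𝒱 {i | i.1 + i.2 = k ∧ p ≤ i.1}

theorem columnFiltration_zero (𝒱 : ℕ × ℕ → Submodule ℂ V) (k : ℕ) :
    columnFiltration 𝒱 k 0 = totalPiece 𝒱 k := by
  simp only [columnFiltration, totalPiece_eq_gradedPart, zero_le, and_true]

theorem columnFiltration_succ_self (𝒱 : ℕ × ℕ → Submodule ℂ V) (k : ℕ) :
    columnFiltration 𝒱 k (k + 1) = ⊥ := by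
  refine le_bot_iff.1 (gradedPart_le_iff.2 fun i hi ↦ ?_)
  have := hi.1
  have := hi.2
  omega

end TotalPiece

section Rank

variable {V : Type*} [AddCommGroup V] [Module ℂ V]

/-- The dimension of the total cohomology `H^k`. -/
noncomputable def deRhamRank (𝒱 : ℕ × ℕ → Submodule ℂ V) (dp db : Module.End ℂ V) (k : ℕ) :
    Cardinal :=
  qrank (ker (dp + db) ⊓ totalPiece 𝒱 k) (range (dp + db))

/-- The dimension of `⨁_{p+q=k} H_∂̄^{p,q}`. -/
noncomputable def dolbeaultRank (𝒱 : ℕ × ℕ → Submodule ℂ V) (db : Module.End ℂ V) (k : ℕ) :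
    Cardinal :=
  ∑ a ∈ Finset.range (k + 1), qrank (ker db ⊓ 𝒱 (a, k - a)) (range db)

/-- The dimension of `⨁_{p+q=k} H_BC^{p,q}`. -/
noncomputable def bottChernRank (𝒱 : ℕ × ℕ → Submodule ℂ V) (dp db : Module.End ℂ V) (k : ℕ) :
    Cardinal :=
  ∑ a ∈ Finset.range (k + 1), qrank (ker dp ⊓ ker db ⊓ 𝒱 (a, k - a)) (range (dp ∘ₗ db))

/-- The dimension of `⨁_{p+q=k} H_A^{p,q}`. -/
noncomputable def aeppliRank (𝒱 : ℕ × ℕ → Submodule ℂ V) (dp db : Module.End ℂ V) (k : ℕ) :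
    Cardinal :=
  ∑ a ∈ Finset.range (k + 1), qrank (ker (dp ∘ₗ db) ⊓ 𝒱 (a, k - a)) (range dp ⊔ range db)

/-- The dimension of the kernel of `H_BC^k → H^k`, which vanishes for all `k` exactly when the
`∂∂̄`-lemma holds. -/
noncomputable def bottChernKerRank (𝒱 : ℕ × ℕ → Submodule ℂ V) (dp db : Module.End ℂ V)
    (k : ℕ) : Cardinal :=
  qrank (ker dp ⊓ ker db ⊓ totalPiece 𝒱 k ⊓ range (dp + db)) (range (dp ∘ₗ db))

/-- The dimension of the cokernel of `H_BC^k → H^k`. -/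
noncomputable def bottChernCokerRank (𝒱 : ℕ × ℕ → Submodule ℂ V) (dp db : Module.End ℂ V)
    (k : ℕ) : Cardinal :=
  qrank (ker (dp + db) ⊓ totalPiece 𝒱 k) (range (dp + db) ⊔ ker dp ⊓ ker db)

/-- The dimension of the kernel of `H^k → H_A^k`. -/
noncomputable def aeppliKerRank (𝒱 : ℕ × ℕ → Submodule ℂ V) (dp db : Module.End ℂ V)
    (k : ℕ) : Cardinal :=
  qrank (ker (dp + db) ⊓ totalPiece 𝒱 k ⊓ (range dp ⊔ range db)) (range (dp + db))

end Rank

/-- A double complex: a pair of anticommuting differentials of bidegrees `(1, 0)` and `(0, 1)` on a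
module bigraded by `ℕ × ℕ`. -/
structure IsBigradedBicomplex {R V : Type*} [CommRing R] [AddCommGroup V] [Module R V]
    (𝒱 : ℕ × ℕ → Submodule R V) (dp db : Module.End R V) : Prop extends IsBicomplex dp db where
  isInternal : DirectSum.IsInternal 𝒱
  dp_mem (i : ℕ × ℕ) (x : V) (hx : x ∈ 𝒱 i) : dp x ∈ 𝒱 (i.1 + 1, i.2)
  db_mem (i : ℕ × ℕ) (x : V) (hx : x ∈ 𝒱 i) : db x ∈ 𝒱 (i.1, i.2 + 1)

namespace IsBigradedBicomplex

section Grading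

variable {R V : Type*} [CommRing R] [AddCommGroup V] [Module R V] {𝒱 : ℕ × ℕ → Submodule R V}
  {dp db : Module.End R V}

theorem isWeight (h : IsBigradedBicomplex 𝒱 dp db) :
    IsWeight (holomorphicWeight h.isInternal) dp db where
  apply_dp := by
    refine LinearMap.congr_fun (f := holomorphicWeight h.isInternal ∘ₗ dp)
      (g := dp ∘ₗ holomorphicWeight h.isInternal + dp)
      (linearMap_ext_of_isInternal h.isInternal fun i x hx ↦ ?_)
    simp [holomorphicWeight_apply_of_mem _ hx, holomorphicWeight_apply_of_mem _ (h.dp_mem i x hx),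
      add_smul]
  apply_db := by
    refine LinearMap.congr_fun (f := holomorphicWeight h.isInternal ∘ₗ db)
      (g := db ∘ₗ holomorphicWeight h.isInternal)
      (linearMap_ext_of_isInternal h.isInternal fun i x hx ↦ ?_)
    simp [holomorphicWeight_apply_of_mem _ hx, holomorphicWeight_apply_of_mem _ (h.db_mem i x hx)]

theorem totalProj_zero_add (h : IsBigradedBicomplex 𝒱 dp db) (x : V) :
    totalProj h.isInternal 0 ((dp + db) x) = 0 := by
  have preimage_dp : (fun i : ℕ × ℕ ↦ (i.1 + 1, i.2)) ⁻¹' {i | i.1 + i.2 = 0} = ∅ := by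
    ext; simp
  have preimage_db : (fun i : ℕ × ℕ ↦ (i.1, i.2 + 1)) ⁻¹' {i | i.1 + i.2 = 0} = ∅ := by
    ext; simp
  rw [LinearMap.add_apply, map_add, totalProj, gradedProj_apply_shift _ h.dp_mem,
    gradedProj_apply_shift _ h.db_mem, preimage_dp, preimage_db, gradedProj_empty]
  simp only [LinearMap.zero_apply, map_zero, add_zero]

theorem totalProj_succ_add (h : IsBigradedBicomplex 𝒱 dp db) (k : ℕ) (x : V) :
    totalProj h.isInternal (k + 1) ((dp + db) x) = (dp + db) (totalProj h.isInternal k x) := by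
  have preimage_dp : (fun i : ℕ × ℕ ↦ (i.1 + 1, i.2)) ⁻¹' {i | i.1 + i.2 = k + 1} =
      {i : ℕ × ℕ | i.1 + i.2 = k} := by
    ext i
    simp only [Set.mem_preimage, Set.mem_ofPred_eq]
    omega
  have preimage_db : (fun i : ℕ × ℕ ↦ (i.1, i.2 + 1)) ⁻¹' {i | i.1 + i.2 = k + 1} =
      {i : ℕ × ℕ | i.1 + i.2 = k} := by
    ext i
    simp only [Set.mem_preimage, Set.mem_ofPred_eq]
    omega
  rw [LinearMap.add_apply, map_add, totalProj, gradedProj_apply_shift _ h.dp_mem,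
    gradedProj_apply_shift _ h.db_mem, preimage_dp, preimage_db, totalProj, LinearMap.add_apply]

theorem ker_add_mem_invtSubmodule (h : IsBigradedBicomplex 𝒱 dp db) (k : ℕ) :
    ker (dp + db) ∈ (totalProj h.isInternal k).invtSubmodule := by
  intro x hx
  rw [Submodule.mem_comap, mem_ker, ← h.totalProj_succ_add, mem_ker.1 hx, map_zero]

theorem range_add_mem_invtSubmodule (h : IsBigradedBicomplex 𝒱 dp db) (k : ℕ) :
    range (dp + db) ∈ (totalProj h.isInternal k).invtSubmodule := by
  rintro _ ⟨x, rfl⟩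
  cases k with
  | zero => exact ⟨0, by rw [map_zero, h.totalProj_zero_add]⟩
  | succ k => exact ⟨_, (h.totalProj_succ_add k x).symm⟩

theorem inf_ker_mem_homogeneousSubmodules (h : IsBigradedBicomplex 𝒱 dp db) :
    ker dp ⊓ ker db ∈ homogeneousSubmodules h.isInternal :=
  (homogeneousSubmodules h.isInternal).inf_mem
    (ker_mem_homogeneousSubmodules _ (fun i j hij ↦ by simp_all [Prod.ext_iff]) h.dp_mem)
    (ker_mem_homogeneousSubmodules _ (fun i j hij ↦ by simp_all [Prod.ext_iff]) h.db_mem)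

theorem range_sup_mem_homogeneousSubmodules (h : IsBigradedBicomplex 𝒱 dp db) :
    range dp ⊔ range db ∈ homogeneousSubmodules h.isInternal :=
  (homogeneousSubmodules h.isInternal).sup_mem
    (range_mem_homogeneousSubmodules _ h.dp_mem) (range_mem_homogeneousSubmodules _ h.db_mem)

theorem comp_mem (h : IsBigradedBicomplex 𝒱 dp db) (i : ℕ × ℕ) (x : V) (hx : x ∈ 𝒱 i) :
    (dp ∘ₗ db) x ∈ 𝒱 (i.1 + 1, i.2 + 1) :=
  h.dp_mem _ _ (h.db_mem i x hx)

theorem range_comp_mem_homogeneousSubmodules (h : IsBigradedBicomplex 𝒱 dp db) :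
    range (dp ∘ₗ db) ∈ homogeneousSubmodules h.isInternal :=
  range_mem_homogeneousSubmodules _ h.comp_mem

theorem ker_comp_mem_homogeneousSubmodules (h : IsBigradedBicomplex 𝒱 dp db) :
    ker (dp ∘ₗ db) ∈ homogeneousSubmodules h.isInternal :=
  ker_mem_homogeneousSubmodules _ (fun i j hij ↦ by simp_all [Prod.ext_iff]) h.comp_mem

end Grading

section Rank

variable {V : Type*} [AddCommGroup V] [Module ℂ V] {𝒱 : ℕ × ℕ → Submodule ℂ V}
  {dp db : Module.End ℂ V}

theorem map_add_ker_comp_inf_totalPiece (h : IsBigradedBicomplex 𝒱 dp db) (k : ℕ) :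
    (ker (dp ∘ₗ db) ⊓ totalPiece 𝒱 k).map (dp + db) =
      ker dp ⊓ ker db ⊓ totalPiece 𝒱 (k + 1) ⊓ range (dp + db) := by
  have proj_source := isProj_totalProj h.isInternal k
  have proj_target := isProj_totalProj h.isInternal (k + 1)
  apply le_antisymm
  · rintro _ ⟨x, ⟨hxK, hxk⟩, rfl⟩
    refine ⟨⟨h.add_apply_mem_inf_ker_iff.2 hxK, ?_⟩, x, rfl⟩
    rw [← proj_source.map_id x hxk, ← h.totalProj_succ_add]
    exact proj_target.map_mem _
  · rintro _ ⟨⟨hxZ, hxk⟩, x, rfl⟩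
    rw [← proj_target.map_id _ hxk, h.totalProj_succ_add]
    refine ⟨_, ⟨?_, proj_source.map_mem x⟩, rfl⟩
    exact mem_invtSubmodule_of_mem_homogeneousSubmodules _ h.ker_comp_mem_homogeneousSubmodules k
      (h.add_apply_mem_inf_ker_iff.1 hxZ)

theorem map_dp_ker_add_inf_totalPiece_le (h : IsBigradedBicomplex 𝒱 dp db) (k : ℕ) :
    (ker (dp + db) ⊓ totalPiece 𝒱 k).map dp ≤
      ker dp ⊓ ker db ⊓ totalPiece 𝒱 (k + 1) ⊓ range (dp + db) := by
  rintro _ ⟨x, ⟨hxD, hxk⟩, rfl⟩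
  obtain ⟨hZ, hE⟩ := h.isWeight.map_dp_ker_add_le h.toIsBicomplex ⟨x, hxD, rfl⟩
  refine ⟨⟨hZ, ?_⟩, hE⟩
  rw [totalPiece_eq_gradedPart] at hxk ⊢
  refine apply_mem_gradedPart_of_mapsTo h.dp_mem ?_ hxk
  rintro i rfl
  exact Nat.add_right_comm i.1 1 i.2

theorem ker_add_inf_totalPiece_inf_range_sup_le (h : IsBigradedBicomplex 𝒱 dp db) (k : ℕ) :
    ker (dp + db) ⊓ totalPiece 𝒱 k ⊓ (range dp ⊔ range db) ≤
      (ker dp ⊓ ker db ⊓ totalPiece 𝒱 k ⊓ range (dp + db)).map (holomorphicWeight h.isInternal) ⊔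
        range (dp + db) := by
  rintro x ⟨⟨hxD, hxk⟩, hxS⟩
  have proj := isProj_totalProj h.isInternal k
  obtain ⟨_, ⟨z, ⟨hzZ, hzE⟩, rfl⟩, e, he, rfl⟩ := Submodule.mem_sup.1
    (h.isWeight.ker_add_inf_range_sup_le h.toIsBicomplex ⟨hxD, hxS⟩)
  rw [← proj.map_id _ hxk, map_add, totalProj_holomorphicWeight]
  have hproj_zZ := mem_invtSubmodule_of_mem_homogeneousSubmodules _
    h.inf_ker_mem_homogeneousSubmodules k hzZ
  have hproj_zE := h.range_add_mem_invtSubmodule k hzE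
  exact Submodule.add_mem_sup ⟨_, ⟨⟨hproj_zZ, proj.map_mem z⟩, hproj_zE⟩, rfl⟩
    (h.range_add_mem_invtSubmodule k he)

theorem bottChernRank_eq (h : IsBigradedBicomplex 𝒱 dp db) (k : ℕ) :
    bottChernRank 𝒱 dp db k = qrank (ker dp ⊓ ker db ⊓ totalPiece 𝒱 k) (range (dp + db)) +
      bottChernKerRank 𝒱 dp db k := by
  rw [bottChernRank, sum_qrank_inf_eq_qrank_inf_totalPiece h.isInternal
    h.inf_ker_mem_homogeneousSubmodules h.range_comp_mem_homogeneousSubmodules,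
    qrank_eq_add _ h.range_comp_le_range_add, bottChernKerRank]

theorem aeppliRank_eq (h : IsBigradedBicomplex 𝒱 dp db) (k : ℕ) :
    aeppliRank 𝒱 dp db k = bottChernKerRank 𝒱 dp db (k + 1) +
      qrank (ker (dp + db) ⊓ totalPiece 𝒱 k) (range dp ⊔ range db) := by
  rw [aeppliRank, sum_qrank_inf_eq_qrank_inf_totalPiece h.isInternal
    h.ker_comp_mem_homogeneousSubmodules h.range_sup_mem_homogeneousSubmodules,
    qrank_inf_eq_add_of_isProj (isProj_totalProj h.isInternal k) (h.ker_add_mem_invtSubmodule k)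
      (mem_invtSubmodule_of_mem_homogeneousSubmodules _ h.range_sup_mem_homogeneousSubmodules k)
      h.ker_add_le_ker_comp,
    ← h.comap_add_range_comp, ← qrank_map, h.map_add_ker_comp_inf_totalPiece, bottChernKerRank]

theorem deRhamRank_eq_bottChernCokerRank_add (h : IsBigradedBicomplex 𝒱 dp db) (k : ℕ) :
    deRhamRank 𝒱 dp db k = bottChernCokerRank 𝒱 dp db k +
      qrank (ker dp ⊓ ker db ⊓ totalPiece 𝒱 k) (range (dp + db)) :=
  qrank_inf_eq_add_of_isProj (isProj_totalProj h.isInternal k)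
    (mem_invtSubmodule_of_mem_homogeneousSubmodules _ h.inf_ker_mem_homogeneousSubmodules k)
    (h.range_add_mem_invtSubmodule k) (IsBicomplex.inf_ker_le_ker_add dp db)

theorem deRhamRank_eq_add_aeppliKerRank (𝒱 : ℕ × ℕ → Submodule ℂ V) (dp db : Module.End ℂ V)
    (k : ℕ) :
    deRhamRank 𝒱 dp db k = qrank (ker (dp + db) ⊓ totalPiece 𝒱 k) (range dp ⊔ range db) +
      aeppliKerRank 𝒱 dp db k :=
  qrank_eq_add _ (range_add_le dp db)

theorem aeppliKerRank_le_bottChernKerRank (h : IsBigradedBicomplex 𝒱 dp db) (k : ℕ) :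
    aeppliKerRank 𝒱 dp db k ≤ bottChernKerRank 𝒱 dp db k := by
  refine (qrank_le_of_le_sup (h.ker_add_inf_totalPiece_inf_range_sup_le k)).trans ?_
  rw [qrank_map]
  exact qrank_le_of_inf_le
    (inf_le_right.trans (h.isWeight.range_comp_le_comap h.toIsBicomplex))

theorem bottChernCokerRank_add_aeppliKerRank_le (h : IsBigradedBicomplex 𝒱 dp db) (k : ℕ) :
    bottChernCokerRank 𝒱 dp db k + aeppliKerRank 𝒱 dp db (k + 1) ≤
      bottChernKerRank 𝒱 dp db (k + 1) := by
  have coker_eq : bottChernCokerRank 𝒱 dp db k =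
      qrank ((ker (dp + db) ⊓ totalPiece 𝒱 k).map dp) (range (dp ∘ₗ db)) := by
    rw [qrank_map, bottChernCokerRank, ← h.ker_add_inf_comap_range_comp]
    exact qrank_congr_right (inf_le_right.trans inf_le_right)
      (inf_le_inf_right _ inf_le_left)
  have map_le : (ker (dp + db) ⊓ totalPiece 𝒱 k).map dp ≤
      (range (dp + db)).comap (holomorphicWeight h.isInternal) := by
    rintro _ ⟨x, hx, rfl⟩
    exact h.isWeight.apply_dp_mem_range_add hx.1
  rw [bottChernKerRank, add_comm,
    qrank_eq_add _ (h.isWeight.range_comp_le_comap h.toIsBicomplex), ← qrank_map, coker_eq]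
  refine add_le_add (qrank_le_of_le_sup (h.ker_add_inf_totalPiece_inf_range_sup_le (k + 1)))
    (qrank_le_of_le_sup (le_sup_of_le_left (le_inf ?_ map_le)))
  exact h.map_dp_ker_add_inf_totalPiece_le k

theorem bottChernCokerRank_le_bottChernKerRank (h : IsBigradedBicomplex 𝒱 dp db) (k : ℕ) :
    bottChernCokerRank 𝒱 dp db k ≤ bottChernKerRank 𝒱 dp db (k + 1) :=
  le_self_add.trans (h.bottChernCokerRank_add_aeppliKerRank_le k)

theorem two_mul_deRhamRank_eq (h : IsBigradedBicomplex 𝒱 dp db) (k : ℕ) :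
    2 * deRhamRank 𝒱 dp db k =
      qrank (ker dp ⊓ ker db ⊓ totalPiece 𝒱 k) (range (dp + db)) +
        qrank (ker (dp + db) ⊓ totalPiece 𝒱 k) (range dp ⊔ range db) +
        (aeppliKerRank 𝒱 dp db k + bottChernCokerRank 𝒱 dp db k) := by
  rw [two_mul]
  nth_rw 1 [h.deRhamRank_eq_bottChernCokerRank_add]
  rw [deRhamRank_eq_add_aeppliKerRank]
  abel

theorem bottChernRank_add_aeppliRank_eq (h : IsBigradedBicomplex 𝒱 dp db) (k : ℕ) :
    bottChernRank 𝒱 dp db k + aeppliRank 𝒱 dp db k =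
      qrank (ker dp ⊓ ker db ⊓ totalPiece 𝒱 k) (range (dp + db)) +
        qrank (ker (dp + db) ⊓ totalPiece 𝒱 k) (range dp ⊔ range db) +
        (bottChernKerRank 𝒱 dp db k + bottChernKerRank 𝒱 dp db (k + 1)) := by
  rw [h.bottChernRank_eq, h.aeppliRank_eq]
  abel

theorem two_mul_deRhamRank_le (h : IsBigradedBicomplex 𝒱 dp db) (k : ℕ) :
    2 * deRhamRank 𝒱 dp db k ≤ bottChernRank 𝒱 dp db k + aeppliRank 𝒱 dp db k := by
  rw [h.two_mul_deRhamRank_eq, h.bottChernRank_add_aeppliRank_eq]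
  gcongr
  · exact h.aeppliKerRank_le_bottChernKerRank k
  · exact h.bottChernCokerRank_le_bottChernKerRank k

theorem eq_bottChernKerRank_of_two_mul_deRhamRank_eq (h : IsBigradedBicomplex 𝒱 dp db) {k : ℕ}
    (hfin : deRhamRank 𝒱 dp db k < Cardinal.aleph0)
    (heq : 2 * deRhamRank 𝒱 dp db k = bottChernRank 𝒱 dp db k + aeppliRank 𝒱 dp db k) :
    aeppliKerRank 𝒱 dp db k = bottChernKerRank 𝒱 dp db k ∧
      bottChernCokerRank 𝒱 dp db k = bottChernKerRank 𝒱 dp db (k + 1) := by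
  have hfin' : 2 * deRhamRank 𝒱 dp db k < Cardinal.aleph0 :=
    two_mul (deRhamRank 𝒱 dp db k) ▸ Cardinal.add_lt_aleph0 hfin hfin
  rw [h.two_mul_deRhamRank_eq] at heq hfin'
  rw [h.bottChernRank_add_aeppliRank_eq] at heq
  obtain ⟨common_fin, ker_coker_fin⟩ := Cardinal.add_lt_aleph0_iff.1 hfin'
  exact eq_and_eq_of_add_eq_add_of_lt_aleph0 (h.aeppliKerRank_le_bottChernKerRank k)
    (h.bottChernCokerRank_le_bottChernKerRank k)
    (Cardinal.eq_of_add_eq_add_left heq common_fin) ker_coker_fin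

theorem bottChernKerRank_zero (h : IsBigradedBicomplex 𝒱 dp db) :
    bottChernKerRank 𝒱 dp db 0 = 0 := by
  refine qrank_eq_zero_iff.2 ?_
  rintro _ ⟨⟨-, hx⟩, x, rfl⟩
  rw [← (isProj_totalProj h.isInternal 0).map_id _ hx, h.totalProj_zero_add]
  exact zero_mem _

theorem forall_bottChernKerRank_eq_zero_iff (h : IsBigradedBicomplex 𝒱 dp db) :
    (∀ k, bottChernKerRank 𝒱 dp db k = 0) ↔
      ker dp ⊓ ker db ⊓ range (dp + db) = range (dp ∘ₗ db) := by
  constructor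
  · intro hN
    refine le_antisymm ?_ (le_inf h.range_comp_le_inf_ker h.range_comp_le_range_add)
    rintro x ⟨hxZ, hxE⟩
    refine mem_of_forall_gradedProj_singleton_mem h.isInternal fun i ↦ ?_
    have totalProj_mem_ker : totalProj h.isInternal (i.1 + i.2) x ∈ ker dp ⊓ ker db :=
      mem_invtSubmodule_of_mem_homogeneousSubmodules _ h.inf_ker_mem_homogeneousSubmodules _ hxZ
    have totalProj_mem_range : totalProj h.isInternal (i.1 + i.2) x ∈ range (dp ∘ₗ db) :=
      qrank_eq_zero_iff.1 (hN (i.1 + i.2))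
        ⟨⟨totalProj_mem_ker, (isProj_totalProj h.isInternal _).map_mem x⟩,
          h.range_add_mem_invtSubmodule _ hxE⟩
    rw [← gradedProj_gradedProj_of_subset h.isInternal (t := {j | j.1 + j.2 = i.1 + i.2})
      (Set.singleton_subset_iff.2 rfl)]
    exact mem_homogeneousSubmodules_iff.1 h.range_comp_mem_homogeneousSubmodules _ _
      totalProj_mem_range
  · intro hlemma k
    exact qrank_eq_zero_iff.2 ((inf_le_inf_right _ inf_le_left).trans hlemma.le)

theorem two_mul_deRhamRank_eq_iff (h : IsBigradedBicomplex 𝒱 dp db)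
    (hfin : ∀ k, deRhamRank 𝒱 dp db k < Cardinal.aleph0) :
    (∀ k, 2 * deRhamRank 𝒱 dp db k = bottChernRank 𝒱 dp db k + aeppliRank 𝒱 dp db k) ↔
      ∀ k, bottChernKerRank 𝒱 dp db k = 0 := by
  refine ⟨fun heq k ↦ ?_, fun hN k ↦ ?_⟩
  · cases k with
    | zero => exact h.bottChernKerRank_zero
    | succ k =>
      have coker_add_ker_le := h.bottChernCokerRank_add_aeppliKerRank_le k
      obtain ⟨-, coker_eq⟩ := h.eq_bottChernKerRank_of_two_mul_deRhamRank_eq (hfin k) (heq k)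
      obtain ⟨ker_eq, -⟩ := h.eq_bottChernKerRank_of_two_mul_deRhamRank_eq (hfin _) (heq (k + 1))
      have hNfin : bottChernKerRank 𝒱 dp db (k + 1) < Cardinal.aleph0 := by
        rw [← ker_eq]
        refine lt_of_le_of_lt ?_ (hfin (k + 1))
        rw [deRhamRank_eq_add_aeppliKerRank]
        exact le_add_self
      rw [coker_eq, ker_eq] at coker_add_ker_le
      exact nonpos_iff_eq_zero.1
        ((Cardinal.add_le_add_iff_of_lt_aleph0 hNfin).1
          (coker_add_ker_le.trans_eq (zero_add _).symm))
  · have aeppliKer_eq := (h.aeppliKerRank_le_bottChernKerRank k).trans_eq (hN k)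
    have coker_eq := (h.bottChernCokerRank_le_bottChernKerRank k).trans_eq (hN (k + 1))
    rw [h.two_mul_deRhamRank_eq, h.bottChernRank_add_aeppliRank_eq, hN, hN,
      nonpos_iff_eq_zero.1 aeppliKer_eq, nonpos_iff_eq_zero.1 coker_eq]

end Rank

section Frolicher

variable {V : Type*} [AddCommGroup V] [Module ℂ V] {𝒱 : ℕ × ℕ → Submodule ℂ V}
  {dp db : Module.End ℂ V}

theorem gradedProj_mem_ker_of_mem_columnFiltration (h : IsBigradedBicomplex 𝒱 dp db) {p q : ℕ}
    {x : V} (hxD : x ∈ ker (dp + db)) (hxF : x ∈ columnFiltration 𝒱 (p + q) p) :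
    gradedProj h.isInternal {(p, q)} x ∈ ker db := by
  have preimage_db : (fun i : ℕ × ℕ ↦ (i.1, i.2 + 1)) ⁻¹' {(p, q + 1)} = {(p, q)} := by
    ext; simp [Prod.ext_iff]
  have dp_mem : dp x ∈ gradedPart 𝒱 {i | p + 1 ≤ i.1} :=
    apply_mem_gradedPart_of_mapsTo h.dp_mem (fun _ hi ↦ Nat.succ_le_succ hi.2) hxF
  have disjoint : Disjoint {(p, q + 1)} {i : ℕ × ℕ | p + 1 ≤ i.1} := by simp
  rw [mem_ker, ← preimage_db, ← gradedProj_apply_shift _ h.db_mem,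
    IsBicomplex.db_apply_of_mem_ker_add hxD, map_neg,
    gradedProj_eq_zero_of_disjoint _ disjoint dp_mem, neg_zero]

theorem mem_of_gradedProj_mem_range (h : IsBigradedBicomplex 𝒱 dp db) {p q : ℕ} {x : V}
    (hxD : x ∈ ker (dp + db)) (hxF : x ∈ columnFiltration 𝒱 (p + q) p)
    (hx : gradedProj h.isInternal {(p, q)} x ∈ range db) :
    x ∈ ker (dp + db) ⊓ columnFiltration 𝒱 (p + q) (p + 1) ⊔ range (dp + db) := by
  set s := (fun i : ℕ × ℕ ↦ (i.1, i.2 + 1)) ⁻¹' {(p, q)}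
  have ⟨y, hy⟩ := hx
  set z := gradedProj h.isInternal s y
  have db_z : db z = gradedProj h.isInternal {(p, q)} x := by
    rw [← gradedProj_apply_shift _ h.db_mem, hy, gradedProj_gradedProj_of_subset _ subset_rfl]
  have dp_z : dp z ∈ columnFiltration 𝒱 (p + q) (p + 1) := by
    refine apply_mem_gradedPart_of_mapsTo h.dp_mem ?_ ((isProj_gradedProj _ s).map_mem y)
    rintro ⟨a, b⟩ hab
    obtain ⟨rfl, rfl⟩ := Prod.mk.inj hab
    exact ⟨Nat.succ_add_eq_add_succ a b, le_rfl⟩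
  have sub_proj : x - gradedProj h.isInternal {(p, q)} x ∈
      columnFiltration 𝒱 (p + q) (p + 1) := by
    refine gradedPart_mono ?_ (sub_gradedProj_mem_gradedPart_diff h.isInternal {(p, q)} hxF)
    rintro ⟨a, b⟩ ⟨⟨hab, hpa⟩, hne⟩
    have hne : ¬(a = p ∧ b = q) := by simpa [Prod.ext_iff] using hne
    exact ⟨hab, by omega⟩
  rw [← sub_add_cancel x ((dp + db) z)]
  refine Submodule.add_mem_sup
    ⟨Submodule.sub_mem _ hxD (h.range_add_le_ker_add ⟨z, rfl⟩), ?_⟩ ⟨z, rfl⟩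
  rw [LinearMap.add_apply, db_z, add_comm (dp z), ← sub_sub]
  exact Submodule.sub_mem _ sub_proj dp_z

theorem qrank_columnFiltration_le (h : IsBigradedBicomplex 𝒱 dp db) (p q : ℕ) :
    qrank (ker (dp + db) ⊓ columnFiltration 𝒱 (p + q) p) (range (dp + db)) ≤
      qrank (ker db ⊓ 𝒱 (p, q)) (range db) +
        qrank (ker (dp + db) ⊓ columnFiltration 𝒱 (p + q) (p + 1)) (range (dp + db)) := by
  refine (qrank_le_add _ _ ((range db).comap (gradedProj h.isInternal {(p, q)}))).trans ?_
  rw [← qrank_map]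
  refine add_le_add (qrank_le_of_le_sup (le_sup_of_le_left ?_)) (qrank_le_of_le_sup ?_)
  · rintro _ ⟨x, ⟨hxD, hxF⟩, rfl⟩
    exact ⟨h.gradedProj_mem_ker_of_mem_columnFiltration hxD hxF,
      gradedPart_singleton (𝒱 := 𝒱) _ ▸ (isProj_gradedProj h.isInternal _).map_mem x⟩
  · rintro x ⟨⟨hxD, hxF⟩, hx⟩
    exact h.mem_of_gradedProj_mem_range hxD hxF hx

theorem deRhamRank_le_dolbeaultRank (h : IsBigradedBicomplex 𝒱 dp db) (k : ℕ) :
    deRhamRank 𝒱 dp db k ≤ dolbeaultRank 𝒱 db k := by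
  have le_partial_sum (n : ℕ) (hn : n ≤ k + 1) : deRhamRank 𝒱 dp db k ≤
      ∑ a ∈ Finset.range n, qrank (ker db ⊓ 𝒱 (a, k - a)) (range db) +
        qrank (ker (dp + db) ⊓ columnFiltration 𝒱 k n) (range (dp + db)) := by
    induction n with
    | zero => simp [deRhamRank, columnFiltration_zero]
    | succ n ih =>
      have hk : n + (k - n) = k := Nat.add_sub_of_le (by omega)
      have filtration_step := h.qrank_columnFiltration_le n (k - n)
      rw [hk] at filtration_step
      rw [Finset.sum_range_succ, add_assoc]
      exact (ih (by omega)).trans (by gcongr)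
  refine (le_partial_sum (k + 1) le_rfl).trans_eq ?_
  rw [columnFiltration_succ_self, inf_bot_eq, qrank_eq_zero_iff.2 bot_le, add_zero, dolbeaultRank]

end Frolicher

end IsBigradedBicomplex

theorem basic_frolicher_type_inequality_general {V : Type*} [AddCommGroup V] [Module ℂ V]
    {𝒱 : ℕ × ℕ → Submodule ℂ V} {dp db : Module.End ℂ V} (h : IsBigradedBicomplex 𝒱 dp db)
    (hfin : ∀ k, deRhamRank 𝒱 dp db k < Cardinal.aleph0) :
    (∀ k, 2 * deRhamRank 𝒱 dp db k ≤ bottChernRank 𝒱 dp db k + aeppliRank 𝒱 dp db k) ∧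
      ((∀ k, 2 * deRhamRank 𝒱 dp db k = bottChernRank 𝒱 dp db k + aeppliRank 𝒱 dp db k) ↔
        ker dp ⊓ ker db ⊓ range (dp + db) = range (dp ∘ₗ db)) :=
  ⟨h.two_mul_deRhamRank_le,
    (h.two_mul_deRhamRank_eq_iff hfin).trans h.forall_bottChernKerRank_eq_zero_iff⟩

/- STATEMENT 14: (Basic Frölicher-type inequality, formalized at the level of the
bounded double complex of complex valued basic forms (Ω^{•,•}(M/F,ℂ), ∂, ∂̄) of a
transversely holomorphic foliation, with d = ∂ + ∂̄.)  If the basic Dolbeault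
cohomology groups are finite dimensional, then for every k,
  Σ_{p+q=k} (dim H^{p,q}_BC + dim H^{p,q}_A) ≥ 2 dim H^k(M/F, ℂ),
with equality for all k iff the double complex satisfies the ∂∂̄-lemma. -/
theorem basic_frolicher_type_inequality
    {V : Type*} [AddCommGroup V] [Module ℂ V]
    (𝒱 : ℕ × ℕ → Submodule ℂ V) (hinternal : DirectSum.IsInternal 𝒱)
    (hbounded : {ab : ℕ × ℕ | 𝒱 ab ≠ ⊥}.Finite)
    (dp db : V →ₗ[ℂ] V)
    (hdpdeg : ∀ a b : ℕ, ∀ x ∈ 𝒱 (a, b), dp x ∈ 𝒱 (a + 1, b))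
    (hdbdeg : ∀ a b : ℕ, ∀ x ∈ 𝒱 (a, b), db x ∈ 𝒱 (a, b + 1))
    (hdpsq : dp ∘ₗ dp = 0) (hdbsq : db ∘ₗ db = 0)
    (hanti : dp ∘ₗ db + db ∘ₗ dp = 0)
    (hfin : ∀ a b : ℕ,
      qrank (ker db ⊓ 𝒱 (a, b)) (range db) < Cardinal.aleph0 ∧
      qrank (ker dp ⊓ 𝒱 (a, b)) (range dp) < Cardinal.aleph0) :
    (∀ k : ℕ,
      2 * qrank (ker (dp + db) ⊓ totalPiece 𝒱 k) (range (dp + db)) ≤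
        ∑ a ∈ Finset.range (k + 1),
          (qrank (ker dp ⊓ ker db ⊓ 𝒱 (a, k - a)) (range (dp ∘ₗ db)) +
            qrank (ker (dp ∘ₗ db) ⊓ 𝒱 (a, k - a)) (range dp ⊔ range db))) ∧
    ((∀ k : ℕ,
      2 * qrank (ker (dp + db) ⊓ totalPiece 𝒱 k) (range (dp + db)) =
        ∑ a ∈ Finset.range (k + 1),
          (qrank (ker dp ⊓ ker db ⊓ 𝒱 (a, k - a)) (range (dp ∘ₗ db)) +
            qrank (ker (dp ∘ₗ db) ⊓ 𝒱 (a, k - a)) (range dp ⊔ range db))) ↔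
      ker dp ⊓ ker db ⊓ range (dp + db) = range (dp ∘ₗ db)) := by
  have h : IsBigradedBicomplex 𝒱 dp db :=
    { dp_dp := LinearMap.congr_fun hdpsq
      db_db := LinearMap.congr_fun hdbsq
      db_dp := fun x ↦ eq_neg_of_add_eq_zero_right (LinearMap.congr_fun hanti x)
      isInternal := hinternal
      dp_mem := fun i ↦ hdpdeg i.1 i.2
      db_mem := fun i ↦ hdbdeg i.1 i.2 }
  have deRham_fin (k : ℕ) : deRhamRank 𝒱 dp db k < Cardinal.aleph0 :=
    (h.deRhamRank_le_dolbeaultRank k).trans_lt <|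
      Finset.sum_induction _ (· < Cardinal.aleph0) (fun _ _ ↦ Cardinal.add_lt_aleph0)
        Cardinal.aleph0_pos fun a _ ↦ (hfin a (k - a)).1
  simpa only [bottChernRank, aeppliRank, deRhamRank, Finset.sum_add_distrib]
    using basic_frolicher_type_inequality_general h deRham_fin
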